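/- Let q = 2^h be a power of 2, n, s positive integers, β ∈ F_{q^n} with β ∉ {0, 1}, and ε ∈ F_{q^n} with Tr_{q^n/2}(ε) = 1, where Tr_{q^n/2}(ε) = Σ_{i=0}^{nh−1} ε^{2^i}. Then the polynomial F(S, Z) = S^{2(q^s−1)}·(Z² + Z + ε)^{q^s} + S^{q^s−1}·(β + Tr_{q^s/2}(Z² + Z + ε)) + (Z² + Z + ε) ∈ F_{q^n}[S, Z] is absolutely irreducible, i.e. irreducible as an element of F̄[S, Z]. -/

import Mathlib

/-!
Put `Q = q ^ s`, `N = Q - 1` and `f(Y) = W ^ Q * Y ^ 2 + (β + T) * Y + W` with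
`T = ∑ i, W ^ 2 ^ i`, so that the polynomial in question is `f(S ^ N)`. Over the algebraic closure
`W = t(t + 1)` with `t = Z - z`, a product of two non-associated primes, and `W ∣ T`.

* `f` is irreducible over `K[Z]` (`irreducible_quadratic`). It is primitive because `β ≠ 0`.
  In a factorization `(aY + b)(cY + d)` with `t ∣ b`, the congruence `ad + bc ≡ β` modulo `t` and
  modulo `t + 1` forces, up to constants, one of two shapes. Either `b = W`, `c = W ^ Q` and `a, d`
  are constant, which contradicts `deg T < 2Q + 2`; or `a = (t + 1) ^ Q`, `b = t`, `c = t ^ Q`,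
  `d = t + 1`, and then comparing the values of `ad + bc` at `z` and `z + 1` gives `β ^ 2 = 1`,
  hence `β = 1`.
* Irreducibility passes from `f(Y)` to `f(S ^ N)` (`irreducible_expand`). As `t` divides the
  constant term `W` exactly once, exactly one irreducible factor `P` of `f(S ^ N)` has constant term
  divisible by `t`. The substitution `S ↦ ζS`, for `ζ` a primitive `N`-th root of unity, preserves
  `f(S ^ N)`, so it preserves `P`; thus `P` and its cofactor are polynomials in `S ^ N`, and the
  factorization descends to `f`.
-/

open Polynomial

/-- An element fixed by the substitution `X ↦ ζX`, with `ζ` a primitive `N`-th root of unity, is a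
polynomial in `X ^ N`. -/
lemma eq_expand_contract_of_comp_eq {R : Type*} [CommRing R] [IsDomain R] {N : ℕ} (hN : 0 < N)
    {ζ : R} (hζ : IsPrimitiveRoot ζ N) {P : R[X]} (hP : P.comp (C ζ * X) = P) :
    P = expand R N (contract N P) := by
  ext i
  rw [coeff_expand hN]
  split_ifs with hi
  · rw [coeff_contract hN.ne', Nat.div_mul_cancel hi]
  · have h1 : P.coeff i * ζ ^ i = P.coeff i := by rw [← comp_C_mul_X_coeff, hP]
    by_contra h0
    exact hi ((hζ.pow_eq_one_iff_dvd i).1 (mul_left_cancel₀ h0 (by rw [h1, mul_one])))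

/-- Let `R` contain a primitive `N`-th root of unity `ζ`. If the constant term of `f` is divisible
exactly once by some prime `t`, then irreducibility of `f` passes to `f(X ^ N)`:
the unique irreducible factor of `f(X ^ N)` whose constant term is divisible by `t` is invariant
under `X ↦ ζX`. -/
lemma irreducible_expand {R : Type*} [CommRing R] [IsDomain R] [UniqueFactorizationMonoid R]
    {N : ℕ} (hN : 0 < N) {ζ : R} (hζ : IsPrimitiveRoot ζ N) {f : R[X]} (hf : Irreducible f)
    {t : R} (ht : Prime t) (h1 : t ∣ f.coeff 0) (h2 : ¬ t * t ∣ f.coeff 0) :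
    Irreducible (expand R N f) := by
  have hf0 : expand R N f ≠ 0 := (expand_ne_zero hN).2 hf.ne_zero
  have hc0 : (expand R N f).coeff 0 = f.coeff 0 := by simp [coeff_expand hN]
  have hζN : ζ ^ N = 1 := hζ.pow_eq_one
  have hcomp : (expand R N f).comp (C ζ * X) = expand R N f := by
    rw [expand_eq_comp_X_pow, comp_assoc]
    simp [mul_pow, ← C_pow, hζN]
  have coeff_comp (A : R[X]) : (A.comp (C ζ * X)).coeff 0 = A.coeff 0 := by
    simp [comp_C_mul_X_coeff]
  obtain ⟨P, hPprime, hPdvd, htP⟩ : ∃ P : R[X], Prime P ∧ P ∣ expand R N f ∧ t ∣ P.coeff 0 := by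
    obtain ⟨s, hs, hassoc⟩ := UniqueFactorizationMonoid.exists_prime_factors _ hf0
    have hd : t ∣ constantCoeff s.prod := by
      refine dvd_trans ?_ (map_dvd constantCoeff hassoc.symm.dvd)
      rw [constantCoeff_apply, hc0]; exact h1
    rw [map_multiset_prod] at hd
    obtain ⟨P, hP, htP⟩ := ht.exists_mem_multiset_map_dvd hd
    exact ⟨P, hs P hP, (Multiset.dvd_prod hP).trans hassoc.dvd, htP⟩
  obtain ⟨H, hPH⟩ := hPdvd
  have hc : f.coeff 0 = P.coeff 0 * H.coeff 0 := by rw [← hc0, hPH, mul_coeff_zero]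
  have htH : ¬ t ∣ H.coeff 0 := fun h ↦ h2 (hc ▸ mul_dvd_mul htP h)
  have hP0 : P.coeff 0 ≠ 0 := fun h ↦ h2 (by rw [hc, h, zero_mul]; exact dvd_zero _)
  have hcompPH : P.comp (C ζ * X) * H.comp (C ζ * X) = P * H := by
    rw [← mul_comp, ← hPH, hcomp]
  have hPinv : P.comp (C ζ * X) = P := by
    rcases hPprime.dvd_or_dvd (Dvd.intro _ hcompPH.symm) with ⟨k, hk⟩ | h
    · have hζ0 : ζ ≠ 0 := fun h ↦ by simp [h, hN.ne'] at hζN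
      have hk0 : k ≠ 0 := by
        rintro rfl
        apply hP0
        rw [← coeff_comp, hk]; simp
      have hdeg := congrArg natDegree hk
      rw [natDegree_comp, natDegree_C_mul_X _ hζ0, mul_one,
        natDegree_mul hPprime.ne_zero hk0] at hdeg
      obtain ⟨c, rfl⟩ := natDegree_eq_zero.1 (show k.natDegree = 0 by omega)
      have hcoef := congrArg (fun A ↦ coeff A 0) hk
      simp only [coeff_comp, coeff_mul_C] at hcoef
      have : c = 1 := mul_left_cancel₀ hP0 (by rw [← hcoef, mul_one])
      rw [hk, this, C_1, mul_one]
    · refine absurd (htP.trans ?_) htH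
      rw [← coeff_comp H]
      exact map_dvd constantCoeff h
  have hHinv : H.comp (C ζ * X) = H := by
    rw [hPinv] at hcompPH
    exact mul_left_cancel₀ hPprime.ne_zero hcompPH
  have hPe := eq_expand_contract_of_comp_eq hN hζ hPinv
  have hHe := eq_expand_contract_of_comp_eq hN hζ hHinv
  have hfac : f = contract N P * contract N H := by
    apply expand_injective hN
    rw [map_mul, ← hPe, ← hHe, hPH]
  have hHu : IsUnit H := by
    rcases hf.isUnit_or_isUnit hfac with h | h
    · exact absurd (hPe ▸ h.map (expand R N)) hPprime.not_isUnit
    · exact hHe ▸ h.map (expand R N)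
  rw [hPH]
  exact (irreducible_mul_isUnit hHu).2 hPprime.irreducible

/-- The quadratic cannot split as `(aY + b)(cY + d)`. Here `t` and `t + 1` are the two prime factors
of `t(t + 1)`, and the labelling is such that `t ∣ b`. -/
lemma no_linear_factors {K : Type*} [Field K] [CharP K 2] {z β : K} {Q : ℕ}
    (hβ0 : β ≠ 0) (hβ1 : β ≠ 1) {t T : K[X]} (ht : t = X - C z)
    (hT : t * (t + 1) ∣ T) (hTdeg : T.natDegree < 2 * Q + 2) {a b c d : K[X]}
    (hac : a * c = (t * (t + 1)) ^ Q) (hbd : b * d = t * (t + 1))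
    (hadbc : a * d + b * c = C β + T) (htb : t ∣ b) : False := by
  have htp : Prime t := ht ▸ prime_X_sub_C z
  have ht1 : t + 1 = X - C (z + 1) := by
    rw [ht, C_add, C_1]; linear_combination (CharTwo.two_eq_zero : (2 : K[X]) = 0)
  have htp1 : Prime (t + 1) := ht1 ▸ prime_X_sub_C _
  have h2 : (1 : K) + 1 = 0 := CharTwo.add_self_eq_zero 1
  have et : t.eval z = 0 := by simp [ht]
  have et1 : t.eval (z + 1) = 1 := by simp [ht]
  have eT : T.eval z = 0 := eval_eq_zero_of_dvd_of_eval_eq_zero hT (by simp [et])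
  have eT1 : T.eval (z + 1) = 0 :=
    eval_eq_zero_of_dvd_of_eval_eq_zero hT (by simp [et1, h2])
  have e0 : a.eval z * d.eval z + b.eval z * c.eval z = β := by
    simpa [eT] using congrArg (eval z) hadbc
  have e1 : a.eval (z + 1) * d.eval (z + 1) + b.eval (z + 1) * c.eval (z + 1) = β := by
    simpa [eT1] using congrArg (eval (z + 1)) hadbc
  have hb0 : b.eval z = 0 := eval_eq_zero_of_dvd_of_eval_eq_zero htb et
  have hta : ¬ t ∣ a := fun h ↦ hβ0 <| by
    rw [← e0, hb0, eval_eq_zero_of_dvd_of_eval_eq_zero h et]; simp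
  have hcop : IsCoprime a t := ((htp.irreducible.coprime_iff_not_dvd).2 hta).symm
  have ha : a ∣ (t + 1) ^ Q :=
    (hcop.pow_right (n := Q)).dvd_of_dvd_mul_left (by rw [← mul_pow, ← hac]; exact dvd_mul_right _ _)
  obtain ⟨b', rfl⟩ := htb
  have hbd' : b' * d = t + 1 := mul_left_cancel₀ htp.ne_zero (by rw [← hbd]; ring)
  have et1' : (t + 1).eval (z + 1) = 0 := by simp [et1, h2]
  -- The prime `t + 1` divides exactly one of `b' = b / t` and `d`.
  rcases htp1.dvd_or_dvd (hbd' ▸ dvd_rfl : t + 1 ∣ b' * d) with h | h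
  · obtain ⟨e, rfl⟩ := h
    have hed : e * d = 1 := mul_left_cancel₀ htp1.ne_zero (by rw [mul_one, ← mul_assoc, hbd'])
    have hta1 : ¬ t + 1 ∣ a := fun h ↦ hβ0 <| by
      rw [← e1, eval_eq_zero_of_dvd_of_eval_eq_zero h et1']; simp [et1, h2]
    have hau : IsUnit a := by
      have : IsCoprime a ((t + 1) ^ Q) :=
        ((htp1.irreducible.coprime_iff_not_dvd).2 hta1).symm.pow_right
      exact this.isUnit_of_dvd' dvd_rfl ha
    have hdu : IsUnit d := .of_mul_eq_one_right _ hed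
    have heu : IsUnit e := .of_mul_eq_one _ hed
    -- Now `a`, `d`, `e` are constants, so `b * c` has degree `2 * Q + 2`, too large.
    have hd1 : t.natDegree = 1 := by rw [ht, natDegree_X_sub_C]
    have hd2 : (t + 1).natDegree = 1 := by rw [ht1, natDegree_X_sub_C]
    have hc0 : c ≠ 0 := by
      rintro rfl
      exact pow_ne_zero Q (mul_ne_zero htp.ne_zero htp1.ne_zero) (by rw [← hac, mul_zero])
    have hcd : c.natDegree = 2 * Q := by
      have := congrArg natDegree hac
      rw [natDegree_mul hau.ne_zero hc0, natDegree_eq_zero_of_isUnit hau, natDegree_pow,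
        natDegree_mul htp.ne_zero htp1.ne_zero, hd1, hd2] at this
      omega
    have hbc : (t * ((t + 1) * e) * c).natDegree = 2 * Q + 2 := by
      rw [natDegree_mul (mul_ne_zero htp.ne_zero (mul_ne_zero htp1.ne_zero heu.ne_zero)) hc0,
        natDegree_mul htp.ne_zero (mul_ne_zero htp1.ne_zero heu.ne_zero),
        natDegree_mul htp1.ne_zero heu.ne_zero, hd1, hd2, natDegree_eq_zero_of_isUnit heu, hcd]
      omega
    have hle : (C β + T - a * d).natDegree < 2 * Q + 2 := by
      refine (natDegree_sub_le _ _).trans_lt (max_lt ?_ ?_)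
      · exact (natDegree_add_le _ _).trans_lt (max_lt (by simp) hTdeg)
      · rw [natDegree_eq_zero_of_isUnit (hau.mul hdu)]; omega
    rw [← hadbc, add_sub_cancel_left, hbc] at hle
    exact lt_irrefl _ hle
  · obtain ⟨e, rfl⟩ := h
    have hbe : b' * e = 1 := mul_left_cancel₀ htp1.ne_zero (by linear_combination hbd')
    obtain ⟨r, hr⟩ := ha
    have hrc : c = t ^ Q * r := by
      have ha0 : a ≠ 0 := by
        rintro rfl
        exact pow_ne_zero Q htp1.ne_zero (by rw [hr, zero_mul])
      apply mul_left_cancel₀ ha0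
      rw [hac, mul_pow, hr]; ring
    have htc : ¬ t + 1 ∣ c := fun h ↦ hβ0 <| by
      rw [← e1, eval_eq_zero_of_dvd_of_eval_eq_zero h et1']; simp [et1, h2]
    have hru : IsUnit r := by
      have h3 : IsCoprime r ((t + 1) ^ Q) :=
        ((htp1.irreducible.coprime_iff_not_dvd).2
          fun h ↦ htc (hrc ▸ h.mul_left _)).symm.pow_right
      exact h3.isUnit_of_dvd' dvd_rfl (hr ▸ dvd_mul_left _ _)
    have hbu : IsUnit b' := .of_mul_eq_one _ hbe
    -- With constants `r`, `b'`, the values of `a * d + b * c` at `z` and `z + 1` are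
    -- `(r * b')⁻¹` and `r * b'`; both equal `β`, so `β ^ 2 = 1`.
    obtain ⟨ρ, -, rfl⟩ := isUnit_iff.1 hru
    obtain ⟨μ, -, rfl⟩ := isUnit_iff.1 hbu
    have f0 : a.eval z * ρ = 1 := by simpa [et] using (congrArg (eval z) hr).symm
    have f1 : μ * e.eval z = 1 := by simpa using congrArg (eval z) hbe
    have g0 : a.eval z * e.eval z = β := by simpa [et] using e0
    have g1 : μ * ρ = β := by
      rw [← e1, hrc]; simp [et1, h2]
    have hsq : β * β = 1 := by
      calc β * β = (a.eval z * e.eval z) * (μ * ρ) := by rw [g0, g1]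
        _ = (a.eval z * ρ) * (μ * e.eval z) := by ring
        _ = 1 := by rw [f0, f1, one_mul]
    have : (β - 1) * (β - 1) = 0 := by
      linear_combination hsq + (1 - β) * h2
    exact hβ1 (sub_eq_zero.1 (mul_self_eq_zero.1 this))

/-- With `W = t(t + 1)` and `Y` the outer variable, `W ^ Q * Y ^ 2 + (β + T) * Y + W` is
irreducible whenever `W ∣ T` and `T` has small degree. -/
lemma irreducible_quadratic {K : Type*} [Field K] [CharP K 2] {z β : K} {Q : ℕ}
    (hβ0 : β ≠ 0) (hβ1 : β ≠ 1) {t T : K[X]} (ht : t = X - C z)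
    (hT : t * (t + 1) ∣ T) (hTdeg : T.natDegree < 2 * Q + 2) :
    Irreducible (C ((t * (t + 1)) ^ Q) * X ^ 2 + C (C β + T) * X + C (t * (t + 1)) : K[X][X]) := by
  set f : K[X][X] :=
    C ((t * (t + 1)) ^ Q) * X ^ 2 + C (C β + T) * X + C (t * (t + 1)) with hf
  have htp : Prime t := ht ▸ prime_X_sub_C z
  have ht1 : t + 1 = X - C (z + 1) := by
    rw [ht, C_add, C_1]; linear_combination (CharTwo.two_eq_zero : (2 : K[X]) = 0)
  have htp1 : Prime (t + 1) := ht1 ▸ prime_X_sub_C _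
  have hlead : (t * (t + 1)) ^ Q ≠ 0 := pow_ne_zero _ (mul_ne_zero htp.ne_zero htp1.ne_zero)
  have hdeg : f.natDegree = 2 := natDegree_quadratic hlead
  have hf0 : f ≠ 0 := by rintro h; rw [h] at hdeg; simp at hdeg
  have hcoeff (u v w : K[X]) : (C u * X ^ 2 + C v * X + C w : K[X][X]).coeff 0 = w ∧
      (C u * X ^ 2 + C v * X + C w : K[X][X]).coeff 1 = v ∧
      (C u * X ^ 2 + C v * X + C w : K[X][X]).coeff 2 = u := by
    simp [coeff_X, coeff_C, coeff_X_pow]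
  obtain ⟨c0, c1, c2⟩ := hcoeff ((t * (t + 1)) ^ Q) (C β + T) (t * (t + 1))
  rw [← hf] at c0 c1 c2
  -- `f` is primitive, since `β` is a combination of its coefficients.
  have hprim (g : K[X]) (h : C g ∣ f) : IsUnit g := by
    rw [C_dvd_iff_dvd_coeff] at h
    have h0 := c0 ▸ h 0
    have h1 := c1 ▸ h 1
    have : g ∣ C β := (dvd_add_left (h0.trans hT)).1 h1
    exact isUnit_of_dvd_unit this (isUnit_C.2 hβ0.isUnit)
  refine ⟨fun h ↦ ?_, fun G H hGH ↦ ?_⟩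
  · rw [natDegree_eq_zero_of_isUnit h] at hdeg; omega
  have hG0 : G ≠ 0 := fun h ↦ hf0 (by rw [hGH, h, zero_mul])
  have hH0 : H ≠ 0 := fun h ↦ hf0 (by rw [hGH, h, mul_zero])
  have hsum : G.natDegree + H.natDegree = 2 := by rw [← natDegree_mul hG0 hH0, ← hGH, hdeg]
  rcases Nat.eq_zero_or_pos G.natDegree with hG | hG
  · obtain ⟨g, rfl⟩ := natDegree_eq_zero.1 hG
    exact .inl (isUnit_C.2 (hprim g (hGH ▸ dvd_mul_right _ _)))
  rcases Nat.eq_zero_or_pos H.natDegree with hH | hH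
  · obtain ⟨g, rfl⟩ := natDegree_eq_zero.1 hH
    exact .inr (isUnit_C.2 (hprim g (hGH ▸ dvd_mul_left _ _)))
  exfalso
  obtain ⟨a, b, rfl⟩ := exists_eq_X_add_C_of_natDegree_le_one (show G.natDegree ≤ 1 by omega)
  obtain ⟨c, d, rfl⟩ := exists_eq_X_add_C_of_natDegree_le_one (show H.natDegree ≤ 1 by omega)
  have hGH' : f = C (a * c) * X ^ 2 + C (a * d + b * c) * X + C (b * d) := by
    rw [hGH]; simp only [C_mul, C_add]; ring
  obtain ⟨hbd, hadbc, hac⟩ := hcoeff (a * c) (a * d + b * c) (b * d)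
  rw [← hGH', c0] at hbd
  rw [← hGH', c1] at hadbc
  rw [← hGH', c2] at hac
  rcases htp.dvd_or_dvd (hbd ▸ dvd_mul_right _ _ : t ∣ b * d) with h | h
  · exact no_linear_factors hβ0 hβ1 ht hT hTdeg hac.symm hbd.symm hadbc.symm h
  · exact no_linear_factors hβ0 hβ1 ht hT hTdeg (a := c) (b := d) (c := a) (d := b)
      (by rw [hac, mul_comm]) (by rw [hbd, mul_comm]) (by rw [hadbc]; ring) h

/-- For `q = 2ʰ`, `β ∈ F_{qⁿ} \ {0,1}` and `ε ∈ F_{qⁿ}` with absolute trace `1`, the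
polynomial `F(S,Z) = S^{2(qˢ−1)}(Z²+Z+ε)^{qˢ} + S^{qˢ−1}(β + Tr_{qˢ/2}(Z²+Z+ε)) +
(Z²+Z+ε)` is absolutely irreducible, i.e. irreducible in `F̄[S,Z]`, realized as
`F̄[Z][S]` (inner variable `Z`, outer variable `S`). -/
theorem stmt_14 (h q n s : ℕ) (hh : 0 < h) (hq : q = 2 ^ h) (hn : 0 < n) (hs : 0 < s)
    (F : Type*) [Field F] [Fintype F] (hF : Fintype.card F = q ^ n)
    (β ε : F) (hβ0 : β ≠ 0) (hβ1 : β ≠ 1)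
    (hε : ∑ i ∈ Finset.range (n * h), ε ^ 2 ^ i = 1)
    (W : Polynomial (AlgebraicClosure F))
    (hW : W = Polynomial.X ^ 2 + Polynomial.X
        + Polynomial.C (algebraMap F (AlgebraicClosure F) ε)) :
    Irreducible
      ((Polynomial.C (W ^ q ^ s) * Polynomial.X ^ (2 * (q ^ s - 1))
        + Polynomial.C (Polynomial.C (algebraMap F (AlgebraicClosure F) β)
            + ∑ i ∈ Finset.range (s * h), W ^ 2 ^ i) * Polynomial.X ^ (q ^ s - 1)
        + Polynomial.C W : Polynomial (Polynomial (AlgebraicClosure F)))) := by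
  have : Fact (Nat.Prime 2) := ⟨Nat.prime_two⟩
  have : CharP F 2 := charP_of_card_eq_prime_pow (f := h * n) (by rw [hF, hq, pow_mul])
  set K := AlgebraicClosure F
  have hQ : q ^ s = 2 ^ (s * h) := by rw [hq, ← pow_mul, mul_comm]
  have hm : 0 < s * h := Nat.mul_pos hs hh
  have hQ2 : 2 ∣ q ^ s := hQ ▸ dvd_pow_self 2 hm.ne'
  have hQpos : 0 < q ^ s := hQ ▸ by positivity
  have hN : 0 < q ^ s - 1 := by omega
  obtain ⟨z, hz⟩ : ∃ z : K, W.eval z = 0 := by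
    obtain ⟨z, hz⟩ := IsAlgClosed.exists_root W (by
      rw [hW, show (X ^ 2 + X + C (algebraMap F K ε) : K[X])
        = C 1 * X ^ 2 + C 1 * X + C (algebraMap F K ε) by simp, degree_quadratic one_ne_zero]
      decide)
    exact ⟨z, hz⟩
  obtain ⟨t, ht⟩ : ∃ t : K[X], t = X - C z := ⟨_, rfl⟩
  have h2 : (2 : K[X]) = 0 := CharTwo.two_eq_zero
  have hWt : W = t * (t + 1) := by
    have hεz : C z ^ 2 + C z + C (algebraMap F K ε) = (0 : K[X]) := by
      rw [← C_pow, ← C_add, ← C_add, ← C_0]; congr 1; simpa [hW] using hz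
    rw [hW, ht]; linear_combination hεz + (X * C z - C z ^ 2) * h2
  have hNK : NeZero ((q ^ s - 1 : ℕ) : K) := ⟨fun h0 ↦ by
    have := (CharP.cast_eq_zero_iff K 2 _).1 h0
    omega⟩
  obtain ⟨ζ, hζ⟩ := HasEnoughRootsOfUnity.exists_primitiveRoot K (q ^ s - 1)
  have hζ' : IsPrimitiveRoot (C ζ : K[X]) (q ^ s - 1) := hζ.map_of_injective C_injective
  have htp : Prime t := ht ▸ prime_X_sub_C z
  have hTdvd : t * (t + 1) ∣ ∑ i ∈ Finset.range (s * h), W ^ 2 ^ i :=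
    Finset.dvd_sum fun i _ ↦ hWt ▸ dvd_pow_self _ (by positivity)
  have hWdeg : W.natDegree = 2 := by
    rw [hW, show (X ^ 2 + X + C (algebraMap F K ε) : K[X])
        = C 1 * X ^ 2 + C 1 * X + C (algebraMap F K ε) by simp, natDegree_quadratic one_ne_zero]
  have hTdeg : (∑ i ∈ Finset.range (s * h), W ^ 2 ^ i).natDegree < 2 * q ^ s + 2 := by
    refine (natDegree_sum_le_of_forall_le (n := 2 * q ^ s) _ _ fun i hi ↦ ?_).trans_lt (by omega)
    rw [natDegree_pow, hWdeg, hQ, mul_comm]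
    exact Nat.mul_le_mul_left 2 (Nat.pow_le_pow_right two_pos (Finset.mem_range.1 hi).le)
  have hquad := irreducible_quadratic (K := K) (β := algebraMap F K β) (Q := q ^ s)
    (by simpa using hβ0) (by simpa using hβ1) ht hTdvd hTdeg
  rw [← hWt] at hquad
  have hc0 : (C (W ^ q ^ s) * X ^ 2 + C (C (algebraMap F K β) +
      ∑ i ∈ Finset.range (s * h), W ^ 2 ^ i) * X + C W : K[X][X]).coeff 0 = t * (t + 1) := by
    simp [hWt]
  have key := irreducible_expand hN hζ' hquad htp (hc0 ▸ dvd_mul_right _ _) (by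
    rw [hc0, mul_dvd_mul_iff_left htp.ne_zero]
    intro hd
    exact htp.not_isUnit (isUnit_of_dvd_one ((dvd_add_right dvd_rfl).1 hd)))
  simpa only [map_add, map_mul, map_pow, expand_C, expand_X, ← pow_mul, mul_comm (q ^ s - 1) 2]
    using key
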